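/- Let k ∈ {0,1} and let F(z) = z^k ∏_{j=1}^∞ (1 − z/ξ_j), where ξ_j > 0 for all j, Σ_j 1/ξ_j < ∞, and the product has at least one factor if k = 0. Then there exists a bounded measurable function g : ℝ → ℝ, vanishing on [0,∞), such that for every z ∈ ℂ with Re(z) < 0 one has 1/F(z) = ∫_{−∞}^0 g(t) e^{−zt} dt, the integral converging absolutely. -/

import Mathlib

noncomputable section

open MeasureTheory Filter Set

namespace BS

lemma expM_integral (f : ℝ → ℂ) :
    ∫ x, f x ∂(ProbabilityTheory.expMeasure 1) = ∫ x in Ioi (0:ℝ), (Real.exp (-x) : ℂ) * f x := by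
  have h1 : ProbabilityTheory.expMeasure 1
      = volume.withDensity (ProbabilityTheory.exponentialPDF 1) := rfl
  rw [h1, integral_withDensity_eq_integral_toReal_smul
    (show Measurable (ProbabilityTheory.exponentialPDF 1) from
      (ProbabilityTheory.measurable_exponentialPDFReal 1).ennreal_ofReal)
    (Eventually.of_forall fun x => ENNReal.ofReal_lt_top), ← integral_Ici_eq_integral_Ioi,
    ← integral_indicator measurableSet_Ici]
  congr 1
  ext x
  rw [ProbabilityTheory.exponentialPDF_eq]
  by_cases hx : 0 ≤ x
  · simp [hx, indicator, (Real.exp_pos _).le]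
  · simp [hx, indicator]

lemma expM_transform (z : ℂ) (hz : z.re < 1) :
    ∫ x : ℝ, Complex.exp (z * (|x| : ℝ)) ∂(ProbabilityTheory.expMeasure 1) = (1 - z)⁻¹ := by
  rw [expM_integral]
  have : ∫ x in Ioi (0:ℝ), (Real.exp (-x) : ℂ) * Complex.exp (z * (|x| : ℝ))
      = ∫ x in Ioi (0:ℝ), Complex.exp ((z - 1) * x) := by
    refine setIntegral_congr_fun measurableSet_Ioi fun x hx => ?_
    have hx : 0 < x := hx
    simp only [abs_of_pos hx]
    push_cast
    rw [← Complex.exp_add]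
    ring_nf
  rw [this, integral_exp_mul_complex_Ioi (by simpa using hz)]
  have : z - 1 ≠ 0 := by
    intro h
    have := congrArg Complex.re h
    simp at this; linarith
  have : 1 - z ≠ 0 := by
    intro h; apply this; linear_combination -h
  simp
  field_simp
  ring

lemma expM_mean : ∫⁻ x : ℝ, ENNReal.ofReal |x| ∂(ProbabilityTheory.expMeasure 1) ≠ ⊤ := by
  have h1 : ProbabilityTheory.expMeasure 1
      = volume.withDensity (ProbabilityTheory.exponentialPDF 1) := rfl
  rw [h1, lintegral_withDensity_eq_lintegral_mul _
    (show Measurable (ProbabilityTheory.exponentialPDF 1) from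
      (ProbabilityTheory.measurable_exponentialPDFReal 1).ennreal_ofReal) (by fun_prop)]
  have hint : IntegrableOn (fun x : ℝ => Real.exp (-x) * x ^ ((2:ℝ) - 1)) (Ioi 0) :=
    Real.GammaIntegral_convergent (by norm_num)
  have h2 := (integrableOn_Ici_iff_integrableOn_Ioi).2 hint
  have h3 := h2.lintegral_lt_top
  rw [← lintegral_indicator measurableSet_Ici] at h3
  refine ne_of_lt (lt_of_le_of_lt (lintegral_mono fun x => ?_) h3)
  simp only [Pi.mul_apply, ProbabilityTheory.exponentialPDF_eq]
  by_cases hx : 0 ≤ x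
  · rw [← ENNReal.ofReal_mul (by simp [hx, (Real.exp_pos _).le])]
    simp only [indicator, mem_Ici, hx, if_true, abs_of_nonneg hx]
    norm_num
  · simp [hx]

lemma exists_law (ξ : ℕ → ℝ) (hpos : ∀ j, 0 < ξ j) (hsum : Summable (fun j => (ξ j)⁻¹)) :
    ∃ ν : Measure ℝ, IsProbabilityMeasure ν ∧ (∀ᵐ u ∂ν, 0 ≤ u) ∧
      ∀ z : ℂ, z.re < 0 → Tendsto (fun m : ℕ => ∏ j ∈ Finset.range m, (1 - z / (ξ j : ℂ))⁻¹)
        atTop (nhds (∫ u : ℝ, Complex.exp (z * u) ∂ν)) := by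
  have hprob : IsProbabilityMeasure (ProbabilityTheory.expMeasure 1) :=
    ProbabilityTheory.isProbabilityMeasure_expMeasure one_pos
  set P : Measure (ℕ → ℝ) := Measure.infinitePi (fun _ => ProbabilityTheory.expMeasure 1) with hP
  have hPp : IsProbabilityMeasure P := by rw [hP]; infer_instance
  set T : (ℕ → ℝ) → ENNReal := fun ω => ∑' j, ENNReal.ofReal ((ξ j)⁻¹ * |ω j|) with hT
  have hTm : Measurable T := by fun_prop
  set S : (ℕ → ℝ) → ℝ := fun ω => (T ω).toReal with hS
  have hSm : Measurable S := hTm.ennreal_toReal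
  have heval : ∀ j, MeasurePreserving (Function.eval j) P (ProbabilityTheory.expMeasure 1) :=
    fun j => measurePreserving_eval_infinitePi _ j
  have hTfin : ∀ᵐ ω ∂P, T ω < ⊤ := by
    refine ae_lt_top hTm ?_
    rw [hT, lintegral_tsum (fun j => (by fun_prop :
      Measurable fun ω : ℕ → ℝ => ENNReal.ofReal ((ξ j)⁻¹ * |ω j|)).aemeasurable)]
    have : ∀ j, ∫⁻ ω, ENNReal.ofReal ((ξ j)⁻¹ * |ω j|) ∂P = ENNReal.ofReal (ξ j)⁻¹ *
        ∫⁻ x : ℝ, ENNReal.ofReal |x| ∂(ProbabilityTheory.expMeasure 1) := by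
      intro j
      rw [← (heval j).lintegral_comp (by fun_prop), ← lintegral_const_mul _ (by fun_prop)]
      refine lintegral_congr fun ω => ?_
      rw [ENNReal.ofReal_mul (inv_nonneg.2 (hpos j).le)]
    simp_rw [this]
    rw [ENNReal.tsum_mul_right]
    exact ENNReal.mul_ne_top hsum.tsum_ofReal_ne_top expM_mean
  have hlim : ∀ᵐ ω ∂P, Tendsto (fun m : ℕ => ∑ j ∈ Finset.range m, (ξ j)⁻¹ * |ω j|) atTop
      (nhds (S ω)) := by
    filter_upwards [hTfin] with ω hω
    have h0 : ∀ j, 0 ≤ (ξ j)⁻¹ * |ω j| := fun j =>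
      mul_nonneg (inv_nonneg.2 (hpos j).le) (abs_nonneg _)
    have h1 : Tendsto (fun m : ℕ => ∑ j ∈ Finset.range m, ENNReal.ofReal ((ξ j)⁻¹ * |ω j|)) atTop
      (nhds (T ω)) := ENNReal.tendsto_nat_tsum _
    have h2 := (ENNReal.tendsto_toReal hω.ne).comp h1
    refine h2.congr fun m => ?_
    simp only [Function.comp]
    rw [← ENNReal.ofReal_sum_of_nonneg (fun j _ => h0 j), ENNReal.toReal_ofReal
      (Finset.sum_nonneg fun j _ => h0 j)]
  refine ⟨P.map S, Measure.isProbabilityMeasure_map hSm.aemeasurable, ?_, ?_⟩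
  · rw [ae_map_iff hSm.aemeasurable measurableSet_Ici]
    exact Eventually.of_forall fun ω => ENNReal.toReal_nonneg
  intro z hz
  rw [integral_map hSm.aemeasurable (by fun_prop)]
  have key : ∀ m : ℕ, ∏ j ∈ Finset.range m, (1 - z / (ξ j : ℂ))⁻¹
      = ∫ ω, Complex.exp (z * ((∑ j ∈ Finset.range m, (ξ j)⁻¹ * |ω j| : ℝ) : ℂ)) ∂P := by
    intro m
    have hind : ProbabilityTheory.iIndepFun (fun (i : Fin m) (ω : ℕ → ℝ) => ω i) P :=
      (ProbabilityTheory.iIndepFun_infinitePi (P := fun _ : ℕ => ProbabilityTheory.expMeasure 1)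
        (X := fun _ x => x) (by fun_prop)).precomp Fin.val_injective
    have := hind.integral_fun_prod_comp (f := fun (i : Fin m) (x : ℝ) =>
      Complex.exp (z / (ξ i : ℂ) * (|x| : ℝ))) (fun i => (measurable_pi_apply (i : ℕ)).aemeasurable)
      (fun i => by fun_prop)
    rw [← Fin.prod_univ_eq_prod_range (fun j => (1 - z / (ξ j : ℂ))⁻¹) m]
    calc _ = ∏ i : Fin m, ∫ ω, Complex.exp (z / (ξ i : ℂ) * (|ω i| : ℝ)) ∂P := by
          refine Finset.prod_congr rfl fun i _ => ?_
          rw [← expM_transform]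
          · rw [← (heval i).map_eq, integral_map (heval i).measurable.aemeasurable (by fun_prop)]
          · rw [Complex.div_ofReal_re]
            exact (div_neg_of_neg_of_pos hz (hpos _)).trans one_pos
      _ = _ := by
          rw [← this]
          refine integral_congr_ae (Eventually.of_forall fun ω => ?_)
          simp only
          rw [← Complex.exp_sum, ← Fin.sum_univ_eq_sum_range (fun j => (ξ j)⁻¹ * |ω j|) m]
          congr 1
          push_cast
          rw [Finset.mul_sum]
          refine Finset.sum_congr rfl fun i _ => ?_
          rw [div_eq_mul_inv, mul_assoc]
  simp_rw [key]
  refine tendsto_integral_of_dominated_convergence (fun _ => 1)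
    (fun m => (by fun_prop : Measurable _).aestronglyMeasurable)
    (integrable_const _) (fun m => Eventually.of_forall fun ω => ?_) ?_
  · rw [Complex.norm_exp, Complex.re_mul_ofReal, Real.exp_le_one_iff]
    refine mul_nonpos_of_nonpos_of_nonneg hz.le (Finset.sum_nonneg fun j _ =>
      mul_nonneg (inv_nonneg.2 (hpos j).le) (abs_nonneg _))
  · filter_upwards [hlim] with ω hω
    exact (Complex.continuous_exp.tendsto _).comp
      (((Complex.continuous_ofReal.tendsto _).comp hω).const_mul z)

lemma laplace_half (ν : Measure ℝ) [IsProbabilityMeasure ν] (hν : ∀ᵐ u ∂ν, 0 ≤ u)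
    (a : ℝ) (ha : 0 ≤ a) :
    ∃ g : ℝ → ℝ, Measurable g ∧ (∀ t : ℝ, |g t| ≤ 1) ∧
      (∀ t : ℝ, 0 ≤ t → g t = 0) ∧
      ∀ z : ℂ, z.re < 0 →
        IntegrableOn (fun t : ℝ => (g t : ℂ) * Complex.exp (-z * t)) (Set.Iic 0) ∧
        ∫ t in Set.Iic (0:ℝ), (g t : ℂ) * Complex.exp (-z * t)
          = (∫ u : ℝ, Complex.exp (z * u) ∂ν) / (a - z) := by
  set K : ℝ × ℝ → ℝ := fun p => if p.2 ≤ -p.1 then Real.exp (-a * (-p.1 - p.2)) else 0 with hK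
  have hKm : Measurable K := by
    refine Measurable.ite (measurableSet_le (by fun_prop) (by fun_prop)) (by fun_prop) (by fun_prop)
  have hKb : ∀ p, ‖K p‖ ≤ 1 := by
    intro p
    simp only [hK]
    split_ifs with h
    · rw [Real.norm_eq_abs, Real.abs_exp, Real.exp_le_one_iff]
      nlinarith
    · simp
  set h : ℝ → ℝ := fun t => ∫ u, K (t, u) ∂ν with hh
  have hhm : Measurable h :=
    (hKm.stronglyMeasurable.integral_prod_right (ν := ν)).measurable
  have hhb : ∀ t, ‖h t‖ ≤ 1 := by
    intro t
    have := norm_integral_le_of_norm_le_const (μ := ν) (f := fun u => K (t, u)) (C := 1)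
      (Eventually.of_forall fun u => hKb _)
    simpa using this
  have hgm : Measurable (fun t : ℝ => if t < 0 then h t else 0) :=
    Measurable.ite measurableSet_Iio hhm measurable_const
  have hgb : ∀ t : ℝ, |(if t < 0 then h t else 0)| ≤ 1 := by
    intro t
    split_ifs
    · exact hhb t
    · simp
  refine ⟨fun t => if t < 0 then h t else 0, hgm, hgb, ?_, ?_⟩
  · intro t ht
    simp [not_lt.2 ht]
  intro z hz
  have hE : IntegrableOn (fun t : ℝ => Complex.exp (-z * t)) (Iic 0) :=
    integrableOn_exp_mul_complex_Iic (by simpa using hz) 0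
  refine ⟨?_, ?_⟩
  · refine Integrable.bdd_mul (c := 1) hE
      (Complex.measurable_ofReal.comp hgm).aestronglyMeasurable (Eventually.of_forall fun t => ?_)
    rw [Complex.norm_real]
    exact hgb t
  have e1 : ∫ t in Set.Iic (0:ℝ), ((if t < 0 then h t else 0 : ℝ) : ℂ) * Complex.exp (-z * t)
      = ∫ t in Set.Iic (0:ℝ), ∫ u, (K (t, u) : ℂ) * Complex.exp (-z * t) ∂ν := by
    rw [integral_Iic_eq_integral_Iio, integral_Iic_eq_integral_Iio]
    refine setIntegral_congr_fun measurableSet_Iio fun t ht => ?_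
    have ht : t < 0 := ht
    simp only [ht, if_true]
    rw [integral_mul_const, integral_complex_ofReal]
  have hfub : Integrable (Function.uncurry fun (t u : ℝ) => (K (t, u) : ℂ) * Complex.exp (-z * t))
      ((volume.restrict (Iic 0)).prod ν) := by
    have := hE.integrable.comp_fst ν
    refine Integrable.bdd_mul (c := 1) this
      (Complex.measurable_ofReal.comp hKm).aestronglyMeasurable (Eventually.of_forall fun t => ?_)
    rw [Complex.norm_real]
    exact hKb _
  rw [e1, integral_integral_swap hfub, ← integral_div]
  refine integral_congr_ae ?_
  filter_upwards [hν] with u hu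
  have hre : 0 < ((a : ℂ) - z).re := by simp; linarith
  have e2 : ∀ t : ℝ, (K (t, u) : ℂ) * Complex.exp (-z * t)
      = (Iic (-u)).indicator (fun t : ℝ => Complex.exp (a * u) * Complex.exp ((a - z) * t)) t := by
    intro t
    by_cases htu : u ≤ -t
    · rw [indicator_of_mem (by simp only [mem_Iic]; linarith)]
      simp only [hK, htu, if_true]
      push_cast
      rw [← Complex.exp_add, ← Complex.exp_add]
      ring_nf
    · rw [indicator_of_notMem (by simp only [mem_Iic]; intro hc; apply htu; linarith)]
      simp [hK, htu]
  simp_rw [e2]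
  rw [setIntegral_indicator measurableSet_Iic, Iic_inter_Iic, min_eq_right (by linarith),
    integral_const_mul, integral_exp_mul_complex_Iic hre, mul_div_assoc', ← Complex.exp_add]
  push_cast
  ring_nf

theorem statement16 (k : ℕ) (hk : k = 0 ∨ k = 1)
    (ξ : ℕ → ℝ) (hpos : ∀ j, 0 < ξ j) (hsum : Summable (fun j => (ξ j)⁻¹))
    (F : ℂ → ℂ)
    (hF : ∀ z : ℂ, Filter.Tendsto
      (fun m : ℕ => z^k * ∏ j ∈ Finset.range m, (1 - z / (ξ j : ℂ)))
      Filter.atTop (nhds (F z))) :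
    ∃ g : ℝ → ℝ, Measurable g ∧ (∃ C : ℝ, ∀ t : ℝ, |g t| ≤ C) ∧
      (∀ t : ℝ, 0 ≤ t → g t = 0) ∧
      ∀ z : ℂ, z.re < 0 →
        IntegrableOn (fun t : ℝ => (g t : ℂ) * Complex.exp (-z * t)) (Set.Iic 0) ∧
        (F z)⁻¹ = ∫ t in Set.Iic (0:ℝ), (g t : ℂ) * Complex.exp (-z * t) := by
  -- reduce to finding a law, a rate `a` and a constant `c`
  suffices H : ∃ ν : Measure ℝ, IsProbabilityMeasure ν ∧ (∀ᵐ u ∂ν, 0 ≤ u) ∧ ∃ a c : ℝ, 0 ≤ a ∧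
      ∀ z : ℂ, z.re < 0 → (F z)⁻¹ = c * ((∫ u : ℝ, Complex.exp (z * u) ∂ν) / (a - z)) by
    obtain ⟨ν, hp, hν, a, c, ha, hz⟩ := H
    obtain ⟨g, gm, gb, g0, gi⟩ := laplace_half ν hν a ha
    refine ⟨fun t => c * g t, gm.const_mul c, ⟨|c|, fun t => ?_⟩, fun t ht => ?_, fun z hz' => ?_⟩
    · rw [abs_mul]
      exact mul_le_of_le_one_right (abs_nonneg c) (gb t)
    · simp [g0 t ht]
    · obtain ⟨h1, h2⟩ := gi z hz'
      have e : (fun t : ℝ => ((c * g t : ℝ) : ℂ) * Complex.exp (-z * t))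
          = fun t : ℝ => (c : ℂ) * ((g t : ℂ) * Complex.exp (-z * t)) := by
        ext t; push_cast; ring
      rw [e, integral_const_mul, h2]
      exact ⟨h1.const_mul _, hz z hz'⟩
  have hne : ∀ z : ℂ, z.re < 0 → ∀ r : ℝ, 0 ≤ r → (r : ℂ) - z ≠ 0 := by
    intro z hz r hr h
    have := congrArg Complex.re h
    simp at this; linarith
  have hne' : ∀ z : ℂ, z.re < 0 → ∀ j, 1 - z / (ξ j : ℂ) ≠ 0 := by
    intro z hz j
    have h1 : (ξ j : ℂ) ≠ 0 := by exact_mod_cast (hpos j).ne'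
    rw [one_sub_div h1]
    exact div_ne_zero (hne z hz _ (hpos j).le) h1
  rcases hk with rfl | rfl
  · obtain ⟨ν, hp, hν, hlim⟩ := exists_law (fun j => ξ (j + 1)) (fun j => hpos _)
      ((summable_nat_add_iff 1).2 hsum)
    refine ⟨ν, hp, hν, ξ 0, ξ 0, (hpos 0).le, fun z hz => ?_⟩
    have h1 := ((hF z).comp (tendsto_add_atTop_nat 1)).mul (hlim z hz)
    have h2 : F z * (∫ u : ℝ, Complex.exp (z * u) ∂ν) = 1 - z / (ξ 0 : ℂ) := by
      refine tendsto_nhds_unique h1 (tendsto_const_nhds.congr fun m => ?_)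
      simp only [Function.comp, pow_zero, one_mul]
      rw [Finset.prod_range_succ', mul_right_comm, ← Finset.prod_mul_distrib,
        Finset.prod_eq_one (fun j _ => mul_inv_cancel₀ (hne' z hz (j + 1))), one_mul]
    have h3 := hne' z hz 0
    have h4 := hne z hz (ξ 0) (hpos 0).le
    have h5 : (ξ 0 : ℂ) ≠ 0 := by exact_mod_cast (hpos 0).ne'
    have h6 : F z ≠ 0 := by
      intro h; rw [h, zero_mul] at h2; exact h3 h2.symm
    field_simp at h2 ⊢
    linear_combination -h2
  · obtain ⟨ν, hp, hν, hlim⟩ := exists_law ξ hpos hsum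
    refine ⟨ν, hp, hν, 0, -1, le_rfl, fun z hz => ?_⟩
    have h1 := (hF z).mul (hlim z hz)
    have h2 : F z * (∫ u : ℝ, Complex.exp (z * u) ∂ν) = z := by
      refine tendsto_nhds_unique h1 (tendsto_const_nhds.congr fun m => ?_)
      rw [pow_one, mul_assoc, ← Finset.prod_mul_distrib,
        Finset.prod_eq_one (fun j _ => mul_inv_cancel₀ (hne' z hz j)), mul_one]
    have h3 : z ≠ 0 := by rintro rfl; simp at hz
    have h6 : F z ≠ 0 := by
      intro h; rw [h, zero_mul] at h2; exact h3 h2.symm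
    push_cast
    field_simp
    linear_combination h2

end BS
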